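/- arXiv:1301.2361 — 2 statements merged into one kernel-verified Lean document; each statement's English description precedes it below -/
import Mathlib

section
/- Let m, n be integers and let s, t be real numbers with t > 0. Let W = (XY⁻¹)^m (X⁻¹Y)^m, let τ = tr W, and let (τ_k)_{k∈ℤ} be the sequence with τ_0 = 0, τ_1 = 1, τ_{k+1} = τ·τ_k - τ_{k-1}. Writing z_{i,j} for the entries of W^n, the identity z_{1,1} + (1 - t)·z_{1,2} = (τ_{n+1} - τ_n) + (s + 2 - t - 1/t)·f_{m-1}(s)·g_{m-1}(s)·τ_n holds. -/
/-- `fN m` is the polynomial `f_m` (for `m ≥ 0`), viewed as a function of a real variable. -/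
noncomputable def fN : ℕ → ℝ → ℝ
  | 0 => fun _ => 1
  | 1 => fun s => s + 1
  | n + 2 => fun s => (s + 2) * fN (n + 1) s - fN n s

/-- `gN m` is the polynomial `g_m` (for `m ≥ 0`), viewed as a function of a real variable. -/
noncomputable def gN : ℕ → ℝ → ℝ
  | 0 => fun _ => 1
  | 1 => fun s => s + 2
  | n + 2 => fun s => (s + 2) * gN (n + 1) s - gN n s

/-- The two-sided family `f_m`, `m ∈ ℤ`, with `f_{-m} = f_{m-1}` for `m ≥ 1`. -/
noncomputable def fZ : ℤ → ℝ → ℝ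
  | Int.ofNat n => fN n
  | Int.negSucc n => fN n

/-- The two-sided family `g_m`, `m ∈ ℤ`, with `g_{-1} = 0` and `g_{-m} = -g_{m-2}` for `m ≥ 2`. -/
noncomputable def gZ : ℤ → ℝ → ℝ
  | Int.ofNat n => gN n
  | Int.negSucc 0 => fun _ => 0
  | Int.negSucc (n + 1) => fun s => -(gN n s)

open Matrix

/-- The matrix `X = [[√t, 1/√t], [0, 1/√t]]`. -/
noncomputable def Xmat (t : ℝ) : Matrix (Fin 2) (Fin 2) ℝ :=
  !![Real.sqrt t, 1 / Real.sqrt t; 0, 1 / Real.sqrt t]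

/-- The matrix `Y = [[√t, 0], [-s√t, 1/√t]]`. -/
noncomputable def Ymat (s t : ℝ) : Matrix (Fin 2) (Fin 2) ℝ :=
  !![Real.sqrt t, 0; -s * Real.sqrt t, 1 / Real.sqrt t]

/-!
A matrix `M` of determinant one satisfies `M ^ (k + 1) = tr M • M ^ k - M ^ (k - 1)`, and every
two-sided sequence with this recurrence is a combination of its values at `0` and `1` whose
coefficients are rescaled Chebyshev polynomials evaluated at `tr M`. Applied to `XY⁻¹` and `X⁻¹Y`,
both of trace `s + 2`, this expresses their `m`-th powers through `f_m`, `f_{m-1}`, `g_{m-1}`;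
applied to `W`, it reduces the claim to `(1 - t) W₁₂ - W₂₂ + 1 = (s + 2 - t - 1/t) f_{m-1} g_{m-1}`,
which follows from `f_m = f_{m-1} + s g_{m-1}` and `det (XY⁻¹)^m = 1`.
-/

section Recurrence

open Polynomial Polynomial.Chebyshev

variable {R : Type*} [CommRing R]

theorem eq_eval_S_smul_sub_of_recurrence {E : Type*} [AddCommGroup E] [Module R E]
    {x : R} {u : ℤ → E} (hu : ∀ k, u (k + 1) = x • u k - u (k - 1)) (n : ℤ) :
    u n = (S R (n - 1)).eval x • u 1 - (S R (n - 2)).eval x • u 0 := by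
  induction n using Polynomial.Chebyshev.induct with
  | zero => simp
  | one => simp
  | add_two k ih₁ ih₀ =>
    have hk := hu (k + 1)
    rw [add_sub_cancel_right, ih₁, ih₀, add_assoc, one_add_one_eq_two] at hk
    rw [hk, S_eq R (k + 2 - 1), S_eq R (k + 2 - 2)]
    simp only [eval_sub, eval_mul, eval_X]
    ring_nf
    module
  | neg_add_one k ih₀ ih₁ =>
    have hk : u (-k - 1) = x • u (-k) - u (-k + 1) := by rw [hu (-k)]; abel
    rw [hk, ih₁, ih₀, S_eq R (-k + 1 - 1), S_eq R (-k + 1 - 2)]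
    simp only [eval_sub, eval_mul, eval_X]
    ring_nf
    module

theorem eq_eval_S_of_recurrence {x : R} {u : ℤ → R} (h0 : u 0 = 0) (h1 : u 1 = 1)
    (hu : ∀ k, u (k + 1) = x * u k - u (k - 1)) (n : ℤ) : u n = (S R (n - 1)).eval x := by
  simpa [h0, h1] using eq_eval_S_smul_sub_of_recurrence (x := x) hu n

theorem add_adjugate_fin_two (M : Matrix (Fin 2) (Fin 2) R) :
    M + M.adjugate = M.trace • (1 : Matrix (Fin 2) (Fin 2) R) := by
  ext i j
  fin_cases i <;> fin_cases j <;> simp [adjugate_fin_two, trace_fin_two, add_comm]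

variable {M : Matrix (Fin 2) (Fin 2) R}

theorem zpow_add_one_of_det_eq_one (hM : M.det = 1) (k : ℤ) :
    M ^ (k + 1) = M.trace • M ^ k - M ^ (k - 1) := by
  have hunit : IsUnit M.det := hM ▸ isUnit_one
  have hinv : M⁻¹ = M.adjugate := by simp [Matrix.inv_def, hM]
  rw [Matrix.zpow_add_one hunit, Matrix.zpow_sub_one hunit, eq_sub_iff_add_eq, ← mul_add, hinv,
    add_adjugate_fin_two, mul_smul_comm, mul_one]

theorem zpow_eq_eval_S_smul_sub (hM : M.det = 1) (n : ℤ) :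
    M ^ n = (S R (n - 1)).eval M.trace • M - (S R (n - 2)).eval M.trace • 1 := by
  simpa using eq_eval_S_smul_sub_of_recurrence (zpow_add_one_of_det_eq_one hM) n

theorem zpow_eq_smul_sub_smul_of_recurrence (hM : M.det = 1) {u : ℤ → R}
    (h0 : u 0 = 0) (h1 : u 1 = 1) (hu : ∀ k, u (k + 1) = M.trace * u k - u (k - 1)) (n : ℤ) :
    M ^ n = u n • M - u (n - 1) • 1 := by
  rw [zpow_eq_eval_S_smul_sub hM, eq_eval_S_of_recurrence h0 h1 hu n,
    eq_eval_S_of_recurrence h0 h1 hu (n - 1), sub_sub, one_add_one_eq_two]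

theorem zpow_apply_zero_zero_add_mul_zpow_apply_zero_one (hM : M.det = 1) {u : ℤ → R}
    (h0 : u 0 = 0) (h1 : u 1 = 1) (hu : ∀ k, u (k + 1) = M.trace * u k - u (k - 1)) (n : ℤ)
    (c : R) :
    (M ^ n) 0 0 + c * (M ^ n) 0 1 = (u (n + 1) - u n) + (c * M 0 1 - M 1 1 + 1) * u n := by
  rw [zpow_eq_smul_sub_smul_of_recurrence hM h0 h1 hu, hu, trace_fin_two]
  simp only [Matrix.sub_apply, Matrix.smul_apply, smul_eq_mul, one_apply_eq,
    one_apply_ne zero_ne_one]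
  ring

end Recurrence

theorem det_zpow {ι K : Type*} [Fintype ι] [DecidableEq ι] [Field K] (A : Matrix ι ι K) (n : ℤ) :
    (A ^ n).det = A.det ^ n := by
  cases n with
  | ofNat n => simp [det_pow]
  | negSucc n => simp [zpow_negSucc, det_nonsing_inv, det_pow]

section TwoSidedPolynomials

open Polynomial Polynomial.Chebyshev

variable (k m : ℤ) (s : ℝ)

theorem fZ_add_one : fZ (k + 1) s = (s + 2) * fZ k s - fZ (k - 1) s := by
  rcases k with (_ | n) | (_ | n)
  · change s + 1 = (s + 2) * 1 - 1
    ring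
  · rw [show Int.ofNat (n + 1) - 1 = Int.ofNat n by simp]
    rfl
  · change 1 = (s + 2) * 1 - (s + 1)
    ring
  · change fN n s = (s + 2) * fN (n + 1) s - ((s + 2) * fN (n + 1) s - fN n s)
    ring

theorem gZ_add_one : gZ (k + 1) s = (s + 2) * gZ k s - gZ (k - 1) s := by
  rcases k with (_ | n) | (_ | _ | n)
  · change s + 2 = (s + 2) * 1 - 0
    ring
  · rw [show Int.ofNat (n + 1) - 1 = Int.ofNat n by simp]
    rfl
  · change 1 = (s + 2) * 0 - -1
    ring
  · change 0 = (s + 2) * -1 - -(s + 2)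
    ring
  · change -gN n s = (s + 2) * -gN (n + 1) s - -((s + 2) * gN (n + 1) s - gN n s)
    ring

theorem gZ_eq_eval_S : gZ k s = (S ℝ k).eval (s + 2) := by
  have h := eq_eval_S_smul_sub_of_recurrence (x := s + 2) (u := (gZ · s)) (gZ_add_one · s) k
  have h0 : gZ 0 s = 1 := rfl
  have h1 : gZ 1 s = s + 2 := rfl
  rw [h, h0, h1, S_eq ℝ k]
  simp [mul_comm]

theorem fZ_eq_gZ_sub : fZ k s = gZ k s - gZ (k - 1) s := by
  have h := eq_eval_S_smul_sub_of_recurrence (x := s + 2) (u := (fZ · s)) (fZ_add_one · s) k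
  have h0 : fZ 0 s = 1 := rfl
  have h1 : fZ 1 s = s + 1 := rfl
  rw [h, h0, h1, gZ_eq_eval_S, gZ_eq_eval_S, S_eq ℝ k]
  simp only [eval_sub, eval_mul, eval_X, smul_eq_mul]
  ring

theorem fZ_eq_fZ_sub_one_add : fZ k s = fZ (k - 1) s + s * gZ (k - 1) s := by
  have hg := gZ_add_one (k - 1) s
  rw [sub_add_cancel] at hg
  rw [fZ_eq_gZ_sub, fZ_eq_gZ_sub, hg]
  ring

variable {s}

theorem zpow_eq_fZ_gZ {b c : ℝ} (hbc : b * c = s) :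
    !![1 + s, b; c, 1] ^ m =
      !![fZ m s, b * gZ (m - 1) s; c * gZ (m - 1) s, fZ (m - 1) s] := by
  have hdet : !![1 + s, b; c, 1].det = 1 := by rw [det_fin_two_of, hbc]; ring
  have htrace : !![1 + s, b; c, 1].trace = s + 2 := by rw [trace_fin_two_of]; ring
  rw [zpow_eq_eval_S_smul_sub hdet, htrace, ← gZ_eq_eval_S, ← gZ_eq_eval_S,
    fZ_eq_fZ_sub_one_add m, fZ_eq_gZ_sub (m - 1), sub_sub, one_add_one_eq_two]
  ext i j
  fin_cases i <;> fin_cases j <;> simp <;> ring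

variable (s)

theorem fZ_mul_fZ_sub_one_sub_mul_gZ_sq : fZ m s * fZ (m - 1) s - s * gZ (m - 1) s ^ 2 = 1 := by
  have hdet := det_zpow !![1 + s, 1; s, 1] m
  rw [zpow_eq_fZ_gZ m (one_mul s), det_fin_two_of, det_fin_two_of,
    show (1 + s) * 1 - 1 * s = 1 by ring, _root_.one_zpow] at hdet
  linear_combination hdet

end TwoSidedPolynomials

theorem det_Xmat {t : ℝ} (ht : 0 < t) : (Xmat t).det = 1 := by
  simp [Xmat, (Real.sqrt_pos.mpr ht).ne']

theorem det_Ymat (s : ℝ) {t : ℝ} (ht : 0 < t) : (Ymat s t).det = 1 := by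
  simp [Ymat, (Real.sqrt_pos.mpr ht).ne']

theorem Xmat_mul_inv_Ymat (s : ℝ) {t : ℝ} (ht : 0 < t) :
    Xmat t * (Ymat s t)⁻¹ = !![1 + s, 1; s, 1] := by
  have hsqrt : √t ≠ 0 := (Real.sqrt_pos.mpr ht).ne'
  rw [Matrix.inv_def, det_Ymat s ht, Xmat, Ymat, adjugate_fin_two_of]
  ext i j
  fin_cases i <;> fin_cases j <;> simp <;> field_simp

theorem inv_Xmat_mul_Ymat (s : ℝ) {t : ℝ} (ht : 0 < t) :
    (Xmat t)⁻¹ * Ymat s t = !![1 + s, -1 / t; -s * t, 1] := by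
  have hsqrt : √t ≠ 0 := (Real.sqrt_pos.mpr ht).ne'
  have hsq : √t ^ 2 = t := Real.sq_sqrt ht.le
  rw [Matrix.inv_def, det_Xmat ht, Xmat, Ymat, adjugate_fin_two_of]
  ext i j
  fin_cases i <;> fin_cases j <;> simp <;> field_simp <;> simp [hsq, mul_comm]

theorem riley_coefficient_eq_fZ_mul_gZ (m : ℤ) (s : ℝ) {t : ℝ} (ht : 0 < t) :
    (1 - t) * ((Xmat t * (Ymat s t)⁻¹) ^ m * ((Xmat t)⁻¹ * Ymat s t) ^ m) 0 1
        - ((Xmat t * (Ymat s t)⁻¹) ^ m * ((Xmat t)⁻¹ * Ymat s t) ^ m) 1 1 + 1 =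
      (s + 2 - t - 1 / t) * fZ (m - 1) s * gZ (m - 1) s := by
  have hprod : -1 / t * (-s * t) = s := by field_simp
  have hdet := fZ_mul_fZ_sub_one_sub_mul_gZ_sq m s
  rw [fZ_eq_fZ_sub_one_add m] at hdet
  rw [Xmat_mul_inv_Ymat s ht, inv_Xmat_mul_Ymat s ht, zpow_eq_fZ_gZ m (one_mul s),
    zpow_eq_fZ_gZ m hprod, fZ_eq_fZ_sub_one_add m]
  simp only [mul_fin_two, of_apply, cons_val_zero, cons_val_one, cons_val', cons_val_fin_one]
  field_simp
  linear_combination (-t) * hdet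

/-- The Riley polynomial of `K(m,n)`:
`z_{1,1} + (1-t) z_{1,2} = (τ_{n+1} - τ_n) + (s + 2 - t - 1/t) f_{m-1} g_{m-1} τ_n`,
where `z_{i,j}` are the entries of `W^n` and `(τ_k)` is the trace-recursion sequence of
`W = (XY⁻¹)^m (X⁻¹Y)^m`. -/
theorem riley_polynomial (m n : ℤ) (s t : ℝ) (ht : 0 < t)
    (τseq : ℤ → ℝ) (h0 : τseq 0 = 0) (h1 : τseq 1 = 1)
    (hrec : ∀ k : ℤ, τseq (k + 1) =
      Matrix.trace ((Xmat t * (Ymat s t)⁻¹) ^ m * ((Xmat t)⁻¹ * Ymat s t) ^ m) * τseq k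
        - τseq (k - 1)) :
    (((Xmat t * (Ymat s t)⁻¹) ^ m * ((Xmat t)⁻¹ * Ymat s t) ^ m) ^ n) 0 0 +
      (1 - t) * (((Xmat t * (Ymat s t)⁻¹) ^ m * ((Xmat t)⁻¹ * Ymat s t) ^ m) ^ n) 0 1 =
    (τseq (n + 1) - τseq n) +
      (s + 2 - t - 1 / t) * fZ (m - 1) s * gZ (m - 1) s * τseq n := by
  have hdet : ((Xmat t * (Ymat s t)⁻¹) ^ m * ((Xmat t)⁻¹ * Ymat s t) ^ m).det = 1 := by
    simp [det_zpow, det_nonsing_inv, det_Xmat ht, det_Ymat s ht]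
  rw [zpow_apply_zero_zero_add_mul_zpow_apply_zero_one hdet h0 h1 hrec,
    riley_coefficient_eq_fZ_mul_gZ m s ht]
end

section
/- Let m be a nonzero integer, let n ≥ 2 be an integer, and let s > 0 be a real number. Set c = 2 - 2cos(π/(2n+1)) and c' = 2 - 2cos(3π/(2n+1)). Then there exists a real number T with s + 2 + c/(s·g_{m-1}(s)²) < T < s + 2 + c'/(s·g_{m-1}(s)²) such that Φ(T) = 0, where Φ(T) = (U_n(τ(T)/2) - U_{n-1}(τ(T)/2)) + (s + 2 - T)·f_{m-1}(s)·g_{m-1}(s)·U_{n-1}(τ(T)/2) and τ(T) = s·(s + 2 - T)·g_{m-1}(s)² + 2. -/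
open Polynomial Real

/-!
Solving `τ(T)/2 = x` for `T` gives `T = s + 2 + (2 - 2x) / (s g²)`, and turns `Φ(T) = 0` into
`U_n(x) - U_{n-1}(x) = 2(1 - x) k U_{n-1}(x)` with `k = f g / (s g²) ≠ 0`. For `x = cos θ` one has
`(U_n - U_{n-1}) cos(θ/2) = cos((n + 1/2)θ)` and `(U_n + U_{n-1}) sin(θ/2) = sin((n + 1/2)θ)`.
At `θ = π/(2n+1)` and `θ = 3π/(2n+1)` the left-hand side of the equation therefore vanishes, while
the right-hand side equals `2k sin(θ/2)` and `-2k sin(θ/2)` respectively. These have opposite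
signs, so the intermediate value theorem gives a solution in between.
-/

theorem pos_and_le_succ_of_recurrence {R : Type*} [CommRing R] [LinearOrder R]
    [IsStrictOrderedRing R] {u : ℕ → R} {s : R} (hs : 0 ≤ s) (h₀ : 0 < u 0) (h₁ : u 0 ≤ u 1)
    (hu : ∀ n, u (n + 2) = (s + 2) * u (n + 1) - u n) (n : ℕ) :
    0 < u n ∧ u n ≤ u (n + 1) := by
  induction n with
  | zero => exact ⟨h₀, h₁⟩
  | succ n ih =>
    obtain ⟨pos, le⟩ := ih
    have pos_succ : 0 < u (n + 1) := pos.trans_le le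
    refine ⟨pos_succ, ?_⟩
    rw [hu n]
    linarith [mul_nonneg hs pos_succ.le]

section RileyCoefficients

variable {s : ℝ}

theorem fN_pos (hs : 0 ≤ s) (n : ℕ) : 0 < fN n s :=
  (pos_and_le_succ_of_recurrence (u := (fN · s)) hs one_pos
    (show 1 ≤ s + 1 by linarith) (fun _ ↦ rfl) n).1

theorem gN_pos (hs : 0 ≤ s) (n : ℕ) : 0 < gN n s :=
  (pos_and_le_succ_of_recurrence (u := (gN · s)) hs one_pos
    (show 1 ≤ s + 2 by linarith) (fun _ ↦ rfl) n).1

theorem fZ_pos (hs : 0 ≤ s) : ∀ m : ℤ, 0 < fZ m s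
  | Int.ofNat n => fN_pos hs n
  | Int.negSucc n => fN_pos hs n

theorem gZ_ne_zero (hs : 0 ≤ s) : ∀ {m : ℤ}, m ≠ -1 → gZ m s ≠ 0
  | Int.ofNat n, _ => (gN_pos hs n).ne'
  | Int.negSucc 0, hm => absurd rfl hm
  | Int.negSucc (n + 1), _ => neg_ne_zero.mpr (gN_pos hs n).ne'

end RileyCoefficients

theorem exists_mem_Ioo_eq_zero_of_mul_neg {α R : Type*} [ConditionallyCompleteLinearOrder α]
    [TopologicalSpace α] [OrderTopology α] [DenselyOrdered α] [Ring R] [LinearOrder R]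
    [IsStrictOrderedRing R] [TopologicalSpace R] [OrderClosedTopology R]
    {a b : α} (hab : a ≤ b) {F : α → R} (hF : ContinuousOn F (Set.Icc a b))
    (h : F a * F b < 0) : ∃ x ∈ Set.Ioo a b, F x = 0 := by
  rcases mul_neg_iff.mp h with ⟨ha, hb⟩ | ⟨ha, hb⟩
  · exact intermediate_value_Ioo' hab hF ⟨hb, ha⟩
  · exact intermediate_value_Ioo hab hF ⟨ha, hb⟩

theorem cos_lt_cos_of_abs_lt_abs {x y : ℝ} (hxy : |x| < |y|) (hy : |y| ≤ π) : cos y < cos x := by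
  rw [← cos_abs x, ← cos_abs y]
  exact cos_lt_cos_of_nonneg_of_le_pi (abs_nonneg x) hy hxy

theorem sin_half_mul_sin_three_half_pos {α : ℝ} (hα : α ≠ 0) (hα' : |2 * α| ≤ π) :
    0 < sin (α / 2) * sin (3 * α / 2) := by
  have h_abs : |α| < |2 * α| := by
    rw [abs_mul, abs_two]
    linarith [abs_pos.mpr hα]
  have h_prod : cos (2 * α) - cos α = -2 * sin (3 * α / 2) * sin (α / 2) := by
    rw [cos_sub_cos]
    ring_nf
  linarith [cos_lt_cos_of_abs_lt_abs h_abs hα']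

section HalfAngle

variable (n : ℤ) (θ : ℝ)

theorem cos_int_mul_eq_U : cos (n * θ) =
    (Chebyshev.U ℝ n).eval (cos θ) - cos θ * (Chebyshev.U ℝ (n - 1)).eval (cos θ) := by
  rw [← Chebyshev.T_real_cos, Chebyshev.T_eq_U_sub_X_mul_U, eval_sub, eval_mul, eval_X]

theorem sin_int_mul_eq_U :
    sin (n * θ) = (Chebyshev.U ℝ (n - 1)).eval (cos θ) * sin θ := by
  rw [Chebyshev.U_real_cos, Int.cast_sub, Int.cast_one, sub_add_cancel]

theorem U_sub_U_eval_cos_mul_cos_half :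
    ((Chebyshev.U ℝ n).eval (cos θ) - (Chebyshev.U ℝ (n - 1)).eval (cos θ)) * cos (θ / 2) =
      cos ((n + 1 / 2) * θ) := by
  obtain ⟨α, rfl⟩ : ∃ α, θ = 2 * α := ⟨θ / 2, by ring⟩
  rw [show (n + 1 / 2) * (2 * α) = n * (2 * α) + α by ring, mul_div_cancel_left₀ α two_ne_zero,
    cos_add, cos_int_mul_eq_U, sin_int_mul_eq_U, sin_two_mul, cos_two_mul']
  linear_combination (Chebyshev.U ℝ (n - 1)).eval (cos α ^ 2 - sin α ^ 2) * cos α *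
    sin_sq_add_cos_sq α

theorem U_add_U_eval_cos_mul_sin_half :
    ((Chebyshev.U ℝ n).eval (cos θ) + (Chebyshev.U ℝ (n - 1)).eval (cos θ)) * sin (θ / 2) =
      sin ((n + 1 / 2) * θ) := by
  obtain ⟨α, rfl⟩ : ∃ α, θ = 2 * α := ⟨θ / 2, by ring⟩
  rw [show (n + 1 / 2) * (2 * α) = n * (2 * α) + α by ring, mul_div_cancel_left₀ α two_ne_zero,
    sin_add, cos_int_mul_eq_U, sin_int_mul_eq_U, sin_two_mul, cos_two_mul']
  linear_combination -(Chebyshev.U ℝ (n - 1)).eval (cos α ^ 2 - sin α ^ 2) * sin α *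
    sin_sq_add_cos_sq α

end HalfAngle

section ReducedRiley

/-- The left-hand side of Riley's equation in the variable `x = τ(T) / 2`, where
`k = f_{m-1} g_{m-1} / (s g_{m-1}²)`. -/
noncomputable def reducedRiley (n : ℤ) (k x : ℝ) : ℝ :=
  (Chebyshev.U ℝ n).eval x - (Chebyshev.U ℝ (n - 1)).eval x -
    2 * (1 - x) * k * (Chebyshev.U ℝ (n - 1)).eval x

variable {n : ℤ} {k : ℝ}

theorem continuous_reducedRiley : Continuous (reducedRiley n k) := by
  unfold reducedRiley
  fun_prop

theorem reducedRiley_cos_of_cos_eq_zero {θ : ℝ} (hθ : cos (θ / 2) ≠ 0)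
    (h : cos ((n + 1 / 2) * θ) = 0) :
    reducedRiley n k (cos θ) = -2 * k * sin (θ / 2) * sin ((n + 1 / 2) * θ) := by
  have hU : (Chebyshev.U ℝ n).eval (cos θ) = (Chebyshev.U ℝ (n - 1)).eval (cos θ) := by
    have h_prod := (U_sub_U_eval_cos_mul_cos_half n θ).trans h
    exact sub_eq_zero.mp ((mul_eq_zero.mp h_prod).resolve_right hθ)
  have h_half : 1 - cos θ = 2 * sin (θ / 2) ^ 2 := by
    rw [sin_sq_eq_half_sub]
    ring_nf
  rw [reducedRiley, ← U_add_U_eval_cos_mul_sin_half, hU, h_half]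
  ring

theorem reducedRiley_cos_mul_reducedRiley_cos_neg (hk : k ≠ 0) {α : ℝ}
    (hα : (2 * n + 1) * α = π) (hα' : |3 * α| < π) :
    reducedRiley n k (cos (3 * α)) * reducedRiley n k (cos α) < 0 := by
  have cos_half_ne_zero {θ : ℝ} (hθ : |θ| < π) : cos (θ / 2) ≠ 0 :=
    (cos_pos_of_mem_Ioo ⟨by linarith [(abs_lt.mp hθ).1], by linarith [(abs_lt.mp hθ).2]⟩).ne'
  have hα_ne : α ≠ 0 := right_ne_zero_of_mul (hα.trans_ne pi_ne_zero)
  have h_abs : |α| < π ∧ |2 * α| ≤ π := by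
    rw [abs_mul, Nat.abs_ofNat] at hα'
    rw [abs_mul, abs_two]
    constructor <;> linarith [abs_nonneg α]
  have h_arg : (n + 1 / 2) * α = π / 2 := by linarith
  have h_arg_three : (n + 1 / 2) * (3 * α) = π / 2 + π := by linarith
  have h_left : reducedRiley n k (cos α) = -2 * k * sin (α / 2) := by
    rw [reducedRiley_cos_of_cos_eq_zero (cos_half_ne_zero h_abs.1) (by rw [h_arg, cos_pi_div_two]),
      h_arg, sin_pi_div_two, mul_one]
  have h_right : reducedRiley n k (cos (3 * α)) = 2 * k * sin (3 * α / 2) := by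
    rw [reducedRiley_cos_of_cos_eq_zero (cos_half_ne_zero hα')
      (by rw [h_arg_three, cos_add_pi, cos_pi_div_two, neg_zero]),
      h_arg_three, sin_add_pi, sin_pi_div_two]
    ring
  have h_sin := sin_half_mul_sin_three_half_pos hα_ne h_abs.2
  calc reducedRiley n k (cos (3 * α)) * reducedRiley n k (cos α)
    _ = -(4 * k ^ 2 * (sin (α / 2) * sin (3 * α / 2))) := by rw [h_left, h_right]; ring
    _ < 0 := neg_neg_of_pos (by positivity)

theorem exists_reducedRiley_eq_zero (hn : 3 < |2 * n + 1|) (hk : k ≠ 0) :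
    ∃ x ∈ Set.Ioo (cos (3 * π / (2 * n + 1))) (cos (π / (2 * n + 1))),
      reducedRiley n k x = 0 := by
  have h_abs : 3 < |(2 * n + 1 : ℝ)| := by exact_mod_cast hn
  have h_ne : (2 * n + 1 : ℝ) ≠ 0 := abs_pos.mp (by linarith)
  rw [mul_div_assoc]
  set α := π / (2 * n + 1)
  have hα : (2 * n + 1) * α = π := mul_div_cancel₀ π h_ne
  have hα_pos : 0 < |α| := abs_pos.mpr (div_ne_zero pi_ne_zero h_ne)
  have hα_three : |3 * α| < π := by
    rw [← abs_of_pos pi_pos, ← hα, abs_mul, abs_mul, Nat.abs_ofNat]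
    gcongr
  have h_cos : cos (3 * α) < cos α := by
    refine cos_lt_cos_of_abs_lt_abs ?_ hα_three.le
    rw [abs_mul, Nat.abs_ofNat]
    linarith
  exact exists_mem_Ioo_eq_zero_of_mul_neg h_cos.le continuous_reducedRiley.continuousOn
    (reducedRiley_cos_mul_reducedRiley_cos_neg hk hα hα_three)

end ReducedRiley

theorem riley_root_exists_pos_general (m n : ℤ) (hm : m ≠ 0) (hn : 3 < |2 * n + 1|) (s : ℝ)
    (hs : 0 < s) :
    ∃ T : ℝ,
      s + 2 + (2 - 2 * Real.cos (π / (2 * n + 1))) / (s * gZ (m - 1) s ^ 2) < T ∧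
      T < s + 2 + (2 - 2 * Real.cos (3 * π / (2 * n + 1))) / (s * gZ (m - 1) s ^ 2) ∧
      ((Polynomial.Chebyshev.U ℝ n).eval ((s * (s + 2 - T) * gZ (m - 1) s ^ 2 + 2) / 2) -
        (Polynomial.Chebyshev.U ℝ (n - 1)).eval
          ((s * (s + 2 - T) * gZ (m - 1) s ^ 2 + 2) / 2)) +
      (s + 2 - T) * fZ (m - 1) s * gZ (m - 1) s *
        (Polynomial.Chebyshev.U ℝ (n - 1)).eval
          ((s * (s + 2 - T) * gZ (m - 1) s ^ 2 + 2) / 2) = 0 := by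
  have hg := gZ_ne_zero hs.le (show m - 1 ≠ -1 by omega)
  have hf := (fZ_pos hs.le (m - 1)).ne'
  set g := gZ (m - 1) s
  set f := fZ (m - 1) s
  have hsg : 0 < s * g ^ 2 := by positivity
  obtain ⟨x, ⟨hx_lower, hx_upper⟩, hx⟩ :=
    exists_reducedRiley_eq_zero hn (div_ne_zero (mul_ne_zero hf hg) hsg.ne')
  refine ⟨s + 2 + (2 - 2 * x) / (s * g ^ 2), by gcongr, by gcongr, ?_⟩
  have hτ : (s * (s + 2 - (s + 2 + (2 - 2 * x) / (s * g ^ 2))) * g ^ 2 + 2) / 2 = x := by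
    field_simp
    ring
  rw [hτ, ← hx, reducedRiley]
  ring

/-- For `m ≠ 0`, `n ≥ 2` and `s > 0`, the function
`Φ(T) = (U_n(τ(T)/2) - U_{n-1}(τ(T)/2)) + (s+2-T) f_{m-1} g_{m-1} U_{n-1}(τ(T)/2)`,
with `τ(T) = s(s+2-T) g_{m-1}² + 2`, has a zero `T` with
`s + 2 + c/(s g_{m-1}²) < T < s + 2 + c'/(s g_{m-1}²)`, where `c = 2 - 2cos(π/(2n+1))`
and `c' = 2 - 2cos(3π/(2n+1))`. -/
theorem riley_root_exists_pos (m n : ℤ) (hm : m ≠ 0) (hn : 2 ≤ n) (s : ℝ) (hs : 0 < s) :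
    ∃ T : ℝ,
      s + 2 + (2 - 2 * Real.cos (π / (2 * n + 1))) / (s * gZ (m - 1) s ^ 2) < T ∧
      T < s + 2 + (2 - 2 * Real.cos (3 * π / (2 * n + 1))) / (s * gZ (m - 1) s ^ 2) ∧
      ((Polynomial.Chebyshev.U ℝ n).eval ((s * (s + 2 - T) * gZ (m - 1) s ^ 2 + 2) / 2) -
        (Polynomial.Chebyshev.U ℝ (n - 1)).eval
          ((s * (s + 2 - T) * gZ (m - 1) s ^ 2 + 2) / 2)) +
      (s + 2 - T) * fZ (m - 1) s * gZ (m - 1) s *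
        (Polynomial.Chebyshev.U ℝ (n - 1)).eval
          ((s * (s + 2 - T) * gZ (m - 1) s ^ 2 + 2) / 2) = 0 :=
  riley_root_exists_pos_general m n hm (lt_abs.mpr (.inl (by omega))) s hs
end
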